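/- arXiv:gr-qc/0511037 — 2 statements merged into one kernel-verified Lean document; each statement's English description precedes it below -/
import Mathlib

section
/- Fix θ ∈ (0, π) and real numbers c, d, γ₃, δ₃, l, l̄, p, p̄, M, M̄. Suppose β, γ, δ, U, V, W : (0, ∞) → ℝ satisfy, as r → ∞: γ(r) = c/r + γ₃/r³ + O(1/r⁴), δ(r) = d/r + δ₃/r³ + O(1/r⁴), β(r) = −(c² + d²)/(4r²) + O(1/r⁴), U(r) = −l/r² + p/r³ + O(1/r⁴), W(r) = −l̄/r² + p̄/r³ + O(1/r⁴), V(r) = −r + 2M + M̄/r + O(1/r²). Define X₁(r) := −(1 + V/r)e^{2β} − r²e^{2γ}U²cosh 2δ − r²e^{−2γ}W²cosh 2δ − 2r²UW sinh 2δ, X₂(r) := −r²(e^{2γ}U cosh 2δ + W sinh 2δ), X₃(r) := −r²(e^{−2γ}W cosh 2δ + U sinh 2δ) sin θ. Then as r → ∞: X₁(r) = −2M/r − (l² + l̄² + M̄)/r² + O(1/r³), X₂(r) = l + (2cl + 2dl̄ − p)/r + O(1/r²), X₃(r) = l̄ sin θ + (sin θ)(−2cl̄ + 2dl − p̄)/r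 + O(1/r²). -/
/-!
Write `f ~ (a, b)` when `f r = a + b / r + O(r⁻²)`, i.e. when `f` has the 1-jet `(a, b)` at infinity.
Jets add componentwise and multiply by `(a, b) (a', b') = (a a', a b' + b a')` (`HasJet.mul`), and a
function with jet `(0, b)` exponentiates to one with jet `(1, b)` (`HasJet.exp`), hence also
`cosh f ~ (1, 0)` and `sinh f ~ (0, b)`.

All three expansions are computations with these jets. The hypotheses give `γ ~ (0, c)`, `δ ~ (0, d)`,
`β ~ (0, 0)`, `r² U ~ (-l, p)`, `r² W ~ (-lb, pb)` and `r + V ~ (2 M, Mb)`; `X₂` and `X₃` are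
products and sums of functions of this kind. For `X₁` one computes the jet of `r X₁` instead, using
that `1 / r ~ (0, 1)`, and divides the error term by `r`.
-/

open Real

/-- `f(r) = O(r^{-k})` at spatial infinity: there are `C, r₀ > 0` with
`|f r| ≤ C / r^k` for all `r ≥ r₀`. -/
def BigO (f : ℝ → ℝ) (k : ℕ) : Prop :=
  ∃ C r₀ : ℝ, 0 < C ∧ 0 < r₀ ∧ ∀ r : ℝ, r₀ ≤ r → |f r| ≤ C / r ^ k

open Filter Asymptotics

lemma bigO_iff {f : ℝ → ℝ} {k : ℕ} : BigO f k ↔ f =O[atTop] fun r => (r ^ k)⁻¹ := by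
  constructor
  · rintro ⟨C, r₀, -, hr, h⟩
    refine IsBigO.of_bound C ?_
    filter_upwards [eventually_ge_atTop r₀] with r hr'
    have h0 : 0 < r := hr.trans_le hr'
    rw [Real.norm_eq_abs, Real.norm_of_nonneg (by positivity), ← div_eq_mul_inv]
    exact h r hr'
  · intro h
    obtain ⟨C, hC, h⟩ := h.exists_pos
    obtain ⟨r₀, h⟩ := eventually_atTop.1 h.bound
    refine ⟨C, max r₀ 1, hC, by positivity, fun r hr => ?_⟩
    have h0 : 0 < r := lt_of_lt_of_le one_pos ((le_max_right _ _).trans hr)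
    have := h r ((le_max_left _ _).trans hr)
    rwa [Real.norm_eq_abs, Real.norm_of_nonneg (by positivity), ← div_eq_mul_inv] at this

lemma isBigO_inv_pow {m n : ℕ} (h : m ≤ n) :
    (fun r : ℝ => (r ^ n)⁻¹) =O[atTop] fun r => (r ^ m)⁻¹ := by
  refine IsBigO.of_bound 1 ?_
  filter_upwards [eventually_ge_atTop 1] with r hr
  have h0 : 0 < r := one_pos.trans_le hr
  rw [Real.norm_of_nonneg (by positivity), Real.norm_of_nonneg (by positivity), one_mul]
  exact inv_anti₀ (by positivity) (pow_le_pow_right₀ hr h)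

/-- `f` has the 1-jet `(a, b)` at infinity: `f r = a + b / r + O(r⁻²)`. -/
def HasJet (f : ℝ → ℝ) (a b : ℝ) : Prop :=
  (fun r => f r - (a + b / r)) =O[atTop] fun r => (r ^ 2)⁻¹

namespace HasJet

variable {f g : ℝ → ℝ} {a b a' b' : ℝ}

/-- Functions need only agree for positive `r`, which allows cancelling powers of `r`. -/
lemma congr (hf : HasJet f a b) (h : ∀ r, 0 < r → f r = g r) (ha : a = a') (hb : b = b') :
    HasJet g a' b' := by
  subst ha hb
  refine IsBigO.congr' hf ?_ EventuallyEq.rfl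
  filter_upwards [eventually_gt_atTop 0] with r hr
  rw [h r hr]

lemma const (a : ℝ) : HasJet (fun _ => a) a 0 := by
  simpa [HasJet] using isBigO_zero _ _

lemma inv : HasJet (fun r => r⁻¹) 0 1 := by
  simpa [HasJet] using isBigO_zero _ _

lemma add (hf : HasJet f a b) (hg : HasJet g a' b') :
    HasJet (fun r => f r + g r) (a + a') (b + b') := by
  refine (IsBigO.add hf hg).congr_left fun r => ?_
  ring

lemma isBigO_one (hf : HasJet f a b) : f =O[atTop] fun _ => (1 : ℝ) := by
  have h1 : (fun r : ℝ => f r - (a + b / r)) =O[atTop] fun _ => (1 : ℝ) := by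
    simpa using IsBigO.trans hf (isBigO_inv_pow (Nat.zero_le 2))
  have h2 : (fun r : ℝ => a + b / r) =O[atTop] fun _ => (1 : ℝ) :=
    ((tendsto_const_nhds (x := a)).add
      (tendsto_const_nhds (x := b) |>.div_atTop tendsto_id)).isBigO_one ℝ
  exact (h1.add h2).congr_left fun r => by ring

/-- With `F`, `G` the 1-jets of `f`, `g`: `f g - F G = (f - F) g + F (g - G)`, and the product `F G`
exceeds the jet of `f g` only by `b b' / r²`. -/
lemma mul (hf : HasJet f a b) (hg : HasJet g a' b') :
    HasJet (fun r => f r * g r) (a * a') (a * b' + b * a') := by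
  have hF : HasJet (fun r => a + b / r) a b := by
    simpa [HasJet] using isBigO_zero _ _
  have h1 := IsBigO.mul hf hg.isBigO_one
  have h2 := IsBigO.mul hF.isBigO_one hg
  simp only [mul_one, one_mul] at h1 h2
  refine ((h1.add h2).add ((isBigO_refl (fun r : ℝ => (r ^ 2)⁻¹) atTop).const_mul_left
    (b * b'))).congr_left fun r => ?_
  ring

lemma const_mul (k : ℝ) (hf : HasJet f a b) : HasJet (fun r => k * f r) (k * a) (k * b) :=
  ((const k).mul hf).congr (fun _ _ => rfl) rfl (by ring)

lemma neg (hf : HasJet f a b) : HasJet (fun r => -f r) (-a) (-b) :=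
  (hf.const_mul (-1)).congr (fun _ _ => by ring) (by ring) (by ring)

lemma exp (hf : HasJet f 0 b) : HasJet (fun r => Real.exp (f r)) 1 b := by
  have h1 : f =O[atTop] fun r => r⁻¹ := by
    have h : (fun r : ℝ => f r - (0 + b / r)) =O[atTop] fun r => r⁻¹ := by
      simpa using IsBigO.trans hf (isBigO_inv_pow one_le_two)
    refine (h.add ((isBigO_refl (fun r : ℝ => r⁻¹) atTop).const_mul_left b)).congr_left
      fun r => ?_
    ring
  have h0 : Tendsto f atTop (nhds 0) := h1.trans_tendsto tendsto_inv_atTop_zero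
  have hsq : (fun r => Real.exp (f r) - 1 - f r) =O[atTop] fun r => f r ^ 2 := by
    refine IsBigO.of_bound 1 ?_
    filter_upwards [h0.eventually (Metric.closedBall_mem_nhds 0 one_pos)] with r hr
    have hr' : |f r| ≤ 1 := by simpa using hr
    rw [Real.norm_eq_abs, Real.norm_of_nonneg (sq_nonneg _), one_mul]
    exact Real.abs_exp_sub_one_sub_id_le hr'
  have h2 := hsq.trans (h1.pow 2)
  simp only [inv_pow] at h2
  refine (h2.add hf).congr_left fun r => ?_
  ring

lemma cosh (hf : HasJet f 0 b) : HasJet (fun r => Real.cosh (f r)) 1 0 := by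
  have hn : HasJet (fun r => -f r) 0 (-b) := hf.neg.congr (fun _ _ => rfl) neg_zero rfl
  refine ((hf.exp.add hn.exp).const_mul (1 / 2)).congr (fun r _ => ?_) (by norm_num) (by ring)
  rw [Real.cosh_eq]; ring

lemma sinh (hf : HasJet f 0 b) : HasJet (fun r => Real.sinh (f r)) 0 b := by
  have hn : HasJet (fun r => -f r) 0 (-b) := hf.neg.congr (fun _ _ => rfl) neg_zero rfl
  refine ((hf.exp.add hn.exp.neg).const_mul (1 / 2)).congr (fun r _ => ?_) (by norm_num) (by ring)
  rw [Real.sinh_eq]; ring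

lemma bigO (hf : HasJet f a b) : BigO (fun r => f r - (a + b / r)) 2 := bigO_iff.2 hf

/-- Terms of order `r⁻²` and higher do not affect the jet. -/
lemma of_expansion {e₂ e₃ : ℝ}
    (h : BigO (fun r => f r - (a + b / r + e₂ / r ^ 2 + e₃ / r ^ 3)) 2) : HasJet f a b := by
  refine (((bigO_iff.1 h).add ((isBigO_refl (fun r : ℝ => (r ^ 2)⁻¹) atTop).const_mul_left
    e₂)).add ((isBigO_inv_pow (by norm_num : 2 ≤ 3)).const_mul_left e₃)).congr_left fun r => ?_
  ring

end HasJet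

lemma BigO.weaken {f : ℝ → ℝ} {m n : ℕ} (h : BigO f n) (hmn : m ≤ n) : BigO f m :=
  bigO_iff.2 ((bigO_iff.1 h).trans (isBigO_inv_pow hmn))

/-- Multiplying by `r ^ m` costs `m` orders of decay; `g` need only agree with `r ^ m * f` for
positive `r`. -/
lemma BigO.pow_mul {f g : ℝ → ℝ} {n : ℕ} (m : ℕ) (h : BigO f (n + m))
    (hg : ∀ r, 0 < r → g r = r ^ m * f r) : BigO g n := by
  obtain ⟨C, r₀, hC, hr₀, h⟩ := h
  refine ⟨C, r₀, hC, hr₀, fun r hr => ?_⟩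
  have h0 : 0 < r := hr₀.trans_le hr
  rw [hg r h0, abs_mul, abs_of_pos (by positivity : 0 < r ^ m)]
  calc r ^ m * |f r| ≤ r ^ m * (C / r ^ (n + m)) := by gcongr; exact h r hr
    _ = C / r ^ n := by rw [pow_add]; field_simp

/-- Dividing by `r` gains one order of decay. -/
lemma BigO.of_mul {f g : ℝ → ℝ} {n : ℕ} (h : BigO g n)
    (hg : ∀ r, 0 < r → g r = r * f r) : BigO f (n + 1) := by
  obtain ⟨C, r₀, hC, hr₀, h⟩ := h
  refine ⟨C, r₀, hC, hr₀, fun r hr => ?_⟩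
  have h0 : 0 < r := hr₀.trans_le hr
  have := h r hr
  rw [hg r h0, abs_mul, abs_of_pos h0, le_div_iff₀ (by positivity)] at this
  rw [le_div_iff₀ (by positivity)]
  calc |f r| * r ^ (n + 1) = r * |f r| * r ^ n := by ring
    _ ≤ C := this

/-- Asymptotic expansion at spatial infinity of the shift vector components
`X₁, X₂, X₃` of a slice `{t = t₀}` in a Bondi radiating spacetime. -/
theorem shift_vector_expansion
    (θ c d γ₃ δ₃ l lb p pb M Mb : ℝ) (hθ : θ ∈ Set.Ioo 0 π)
    (β γ δ U V W : ℝ → ℝ)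
    (hγ : BigO (fun r => γ r - (c / r + γ₃ / r ^ 3)) 4)
    (hδ : BigO (fun r => δ r - (d / r + δ₃ / r ^ 3)) 4)
    (hβ : BigO (fun r => β r - (-((c ^ 2 + d ^ 2) / (4 * r ^ 2)))) 4)
    (hU : BigO (fun r => U r - (-(l / r ^ 2) + p / r ^ 3)) 4)
    (hW : BigO (fun r => W r - (-(lb / r ^ 2) + pb / r ^ 3)) 4)
    (hV : BigO (fun r => V r - (-r + 2 * M + Mb / r)) 2) :
    -- X₁
    BigO (fun r => (-((1 + V r / r) * exp (2 * β r))
        - r ^ 2 * exp (2 * γ r) * (U r) ^ 2 * cosh (2 * δ r)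
        - r ^ 2 * exp (-(2 * γ r)) * (W r) ^ 2 * cosh (2 * δ r)
        - 2 * r ^ 2 * U r * W r * sinh (2 * δ r))
      - (-(2 * M / r) - (l ^ 2 + lb ^ 2 + Mb) / r ^ 2)) 3 ∧
    -- X₂
    BigO (fun r => (-(r ^ 2 * (exp (2 * γ r) * U r * cosh (2 * δ r) + W r * sinh (2 * δ r))))
      - (l + (2 * c * l + 2 * d * lb - p) / r)) 2 ∧
    -- X₃
    BigO (fun r =>
      (-(r ^ 2 * (exp (-(2 * γ r)) * W r * cosh (2 * δ r) + U r * sinh (2 * δ r)) * sin θ))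
      - (lb * sin θ + sin θ * (-(2 * c * lb) + 2 * d * l - pb) / r)) 2 := by
  have jγ : HasJet γ 0 c := .of_expansion (e₂ := 0) (e₃ := γ₃) <| by
    simpa using hγ.weaken (by norm_num : 2 ≤ 4)
  have jδ : HasJet δ 0 d := .of_expansion (e₂ := 0) (e₃ := δ₃) <| by
    simpa using hδ.weaken (by norm_num : 2 ≤ 4)
  have jβ : HasJet β 0 0 := .of_expansion (e₂ := -((c ^ 2 + d ^ 2) / 4)) (e₃ := 0) <|
    (hβ.weaken (by norm_num : 2 ≤ 4)).pow_mul 0 fun r hr => by field_simp; ring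
  have jU : HasJet (fun r => r ^ 2 * U r) (-l) p := .of_expansion (e₂ := 0) (e₃ := 0) <|
    hU.pow_mul 2 fun r hr => by field_simp; ring
  have jW : HasJet (fun r => r ^ 2 * W r) (-lb) pb := .of_expansion (e₂ := 0) (e₃ := 0) <|
    hW.pow_mul 2 fun r hr => by field_simp; ring
  have jV : HasJet (fun r => r + V r) (2 * M) Mb := .of_expansion (e₂ := 0) (e₃ := 0) <|
    hV.pow_mul 0 fun r hr => by field_simp; ring
  have jE : HasJet (fun r => exp (2 * γ r)) 1 (2 * c) :=
    ((jγ.const_mul 2).congr (fun _ _ => rfl) (mul_zero 2) rfl).exp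
  have jE' : HasJet (fun r => exp (-(2 * γ r))) 1 (-(2 * c)) :=
    ((jγ.const_mul 2).neg.congr (fun _ _ => rfl) (by ring) rfl).exp
  have jB : HasJet (fun r => exp (2 * β r)) 1 0 :=
    ((jβ.const_mul 2).congr (fun _ _ => rfl) (mul_zero 2) (mul_zero 2)).exp
  have j2δ : HasJet (fun r => 2 * δ r) 0 (2 * d) :=
    (jδ.const_mul 2).congr (fun _ _ => rfl) (mul_zero 2) rfl
  have jC := j2δ.cosh
  have jS := j2δ.sinh
  refine ⟨?_, ?_, ?_⟩
  · -- The jet of `r X₁`: each shift term carries a factor `r³ U² = (r² U)² / r`, of jet `(0, l²)`.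
    have jU2 := HasJet.inv.mul ((jE.mul (jU.mul jU)).mul jC)
    have jW2 := HasJet.inv.mul ((jE'.mul (jW.mul jW)).mul jC)
    have jUW := HasJet.inv.mul (((jU.mul jW).mul jS).const_mul 2)
    refine ((((jV.mul jB).add jU2).add jW2).add jUW).neg.bigO.of_mul fun r hr => ?_
    field_simp
    ring
  · refine ((jE.mul jU).mul jC |>.add (jW.mul jS)).neg.bigO.pow_mul 0 fun r hr => ?_
    ring
  · refine (((jE'.mul jW).mul jC |>.add (jU.mul jS)).neg.const_mul (sin θ)).bigO.pow_mul 0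
      fun r hr => ?_
    ring
end

section
/- Let c, d, M : [0, π] × [0, 2π] → ℝ be smooth functions satisfying Condition A and Condition B, and set l := ∂_θ c + 2c cot θ + (∂_ψ d) csc θ and l̄ := ∂_θ d + 2d cot θ − (∂_ψ c) csc θ on (0, π) × [0, 2π]. Then, with all integrals understood as iterated integrals (integrating in ψ first), ∫₀^π ∫₀^{2π} [4M sin θ sin ψ − (∂_θ M) cos θ sin ψ − (∂_ψ M) csc θ cos ψ − (∂_θ l) sin θ sin ψ − (∂_ψ l̄) sin ψ − 2l cos θ sin ψ − l̄ cos ψ] sin θ dψ dθ = 2 ∫₀^π ∫₀^{2π} M sin²θ sin ψ dψ dθ. -/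
/-!
For `θ ∈ (0, π)` the integrand, multiplied by `sin θ`, equals
`2 M sin²θ sin ψ - ∂_θ g - ∂_ψ h`, where

* `g = sin ψ (M sin θ cos θ + l sin²θ)` (`thetaFlux`), written without the singular factors
  `cot θ`, `csc θ`, so that it is smooth everywhere and vanishes at `θ = 0` and `θ = π`;
* `h = M cos ψ + l̄ sin θ sin ψ`.

The integral of `∂_ψ h` over a period vanishes because `sin ψ = 0` at both ends and `M` takes the
same value there (`integrand_inner`). The integral of `∂_θ g` vanishes after exchanging the order
of integration, which is legitimate because `∂_θ g` is continuous (`integral_pd₁_thetaFlux`).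
-/

open Real MeasureTheory

/-- Partial derivative in the first (θ) variable. -/
noncomputable def pd₁ (f : ℝ → ℝ → ℝ) (θ ψ : ℝ) : ℝ := deriv (fun t => f t ψ) θ

/-- Partial derivative in the second (ψ) variable. -/
noncomputable def pd₂ (f : ℝ → ℝ → ℝ) (θ ψ : ℝ) : ℝ := deriv (fun t => f θ t) ψ

/-- Condition A: `f` together with its derivatives up to second order takes equal
values at `ψ = 0` and `ψ = 2π`. -/
def CondA (f : ℝ → ℝ → ℝ) : Prop :=
  ∀ θ : ℝ, f θ 0 = f θ (2 * π) ∧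
    pd₁ f θ 0 = pd₁ f θ (2 * π) ∧ pd₂ f θ 0 = pd₂ f θ (2 * π) ∧
    pd₁ (pd₁ f) θ 0 = pd₁ (pd₁ f) θ (2 * π) ∧
    pd₂ (pd₁ f) θ 0 = pd₂ (pd₁ f) θ (2 * π) ∧
    pd₂ (pd₂ f) θ 0 = pd₂ (pd₂ f) θ (2 * π)

/-- `l = c_{,2} + 2c cot θ + d_{,3} csc θ`. -/
noncomputable def lfun (c d : ℝ → ℝ → ℝ) (θ ψ : ℝ) : ℝ :=
  pd₁ c θ ψ + 2 * c θ ψ * (cos θ / sin θ) + pd₂ d θ ψ * (sin θ)⁻¹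

/-- `l̄ = d_{,2} + 2d cot θ - c_{,3} csc θ`. -/
noncomputable def lbar (c d : ℝ → ℝ → ℝ) (θ ψ : ℝ) : ℝ :=
  pd₁ d θ ψ + 2 * d θ ψ * (cos θ / sin θ) - pd₂ c θ ψ * (sin θ)⁻¹

/-- Joint smoothness on `ℝ × ℝ` of a function of two real variables. -/
def SmoothTwo (f : ℝ → ℝ → ℝ) : Prop := ContDiff ℝ (⊤ : ℕ∞) (fun p : ℝ × ℝ => f p.1 p.2)

namespace SmoothTwo

variable {f : ℝ → ℝ → ℝ}

lemma hasDerivAt_fst (hf : SmoothTwo f) (θ ψ : ℝ) :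
    HasDerivAt (fun t => f t ψ) (pd₁ f θ ψ) θ := by
  have h : Differentiable ℝ (fun t => f t ψ) :=
    (hf.comp (contDiff_id.prodMk contDiff_const)).differentiable (by simp)
  exact (h θ).hasDerivAt

lemma hasDerivAt_snd (hf : SmoothTwo f) (θ ψ : ℝ) :
    HasDerivAt (fun t => f θ t) (pd₂ f θ ψ) ψ := by
  have h : Differentiable ℝ (fun t => f θ t) :=
    (hf.comp (contDiff_const.prodMk contDiff_id)).differentiable (by simp)
  exact (h ψ).hasDerivAt

lemma pd₁_eq_fderiv (hf : SmoothTwo f) (θ ψ : ℝ) :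
    pd₁ f θ ψ = fderiv ℝ (fun p : ℝ × ℝ => f p.1 p.2) (θ, ψ) (1, 0) := by
  have h := ((hf.differentiable (by simp)) (θ, ψ)).hasFDerivAt
  exact (h.comp_hasDerivAt θ ((hasDerivAt_id θ).prodMk (hasDerivAt_const θ ψ))).deriv

lemma pd₂_eq_fderiv (hf : SmoothTwo f) (θ ψ : ℝ) :
    pd₂ f θ ψ = fderiv ℝ (fun p : ℝ × ℝ => f p.1 p.2) (θ, ψ) (0, 1) := by
  have h := ((hf.differentiable (by simp)) (θ, ψ)).hasFDerivAt
  exact (h.comp_hasDerivAt ψ ((hasDerivAt_const ψ θ).prodMk (hasDerivAt_id ψ))).deriv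

lemma pd₁ (hf : SmoothTwo f) : SmoothTwo (pd₁ f) := by
  unfold SmoothTwo
  simp only [hf.pd₁_eq_fderiv]
  exact (hf.fderiv_right (by simp)).clm_apply contDiff_const

lemma pd₂ (hf : SmoothTwo f) : SmoothTwo (pd₂ f) := by
  unfold SmoothTwo
  simp only [hf.pd₂_eq_fderiv]
  exact (hf.fderiv_right (by simp)).clm_apply contDiff_const

lemma continuous (hf : SmoothTwo f) : Continuous (fun p : ℝ × ℝ => f p.1 p.2) :=
  ContDiff.continuous hf

end SmoothTwo

/-- The quantity `sin ψ (M sin θ cos θ + l sin²θ)`, with `l sin²θ` expanded so that no division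
by `sin θ` occurs. -/
noncomputable def thetaFlux (c d M : ℝ → ℝ → ℝ) (θ ψ : ℝ) : ℝ :=
  sin ψ * (M θ ψ * sin θ * cos θ + sin θ ^ 2 * pd₁ c θ ψ
    + 2 * sin θ * cos θ * c θ ψ + sin θ * pd₂ d θ ψ)

section

variable {c d M : ℝ → ℝ → ℝ}

lemma thetaFlux_smooth (hc : SmoothTwo c) (hd : SmoothTwo d) (hM : SmoothTwo M) :
    SmoothTwo (thetaFlux c d M) := by
  have h1 := hc.pd₁
  have h2 := hd.pd₂
  unfold SmoothTwo at *
  unfold thetaFlux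
  have hs : ContDiff ℝ (⊤ : ℕ∞) (fun p : ℝ × ℝ => sin p.1) := contDiff_sin.comp contDiff_fst
  have hC : ContDiff ℝ (⊤ : ℕ∞) (fun p : ℝ × ℝ => cos p.1) := contDiff_cos.comp contDiff_fst
  have hs2 : ContDiff ℝ (⊤ : ℕ∞) (fun p : ℝ × ℝ => sin p.2) := contDiff_sin.comp contDiff_snd
  fun_prop

lemma pd₁_lfun (hc : SmoothTwo c) (hd : SmoothTwo d) {θ : ℝ} (hs : sin θ ≠ 0) (ψ : ℝ) :
    pd₁ (lfun c d) θ ψ = pd₁ (pd₁ c) θ ψ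
      + (2 * pd₁ c θ ψ * (cos θ / sin θ)
        + 2 * c θ ψ * ((-sin θ * sin θ - cos θ * cos θ) / sin θ ^ 2))
      + (pd₁ (pd₂ d) θ ψ * (sin θ)⁻¹ + pd₂ d θ ψ * (-cos θ / sin θ ^ 2)) :=
  ((((hc.pd₁).hasDerivAt_fst θ ψ).add
    (((hc.hasDerivAt_fst θ ψ).const_mul 2).mul
      ((hasDerivAt_cos θ).div (hasDerivAt_sin θ) hs))).add
    (((hd.pd₂).hasDerivAt_fst θ ψ).mul ((hasDerivAt_sin θ).inv hs))).deriv

lemma pd₁_thetaFlux (hc : SmoothTwo c) (hd : SmoothTwo d) (hM : SmoothTwo M) (θ ψ : ℝ) :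
    pd₁ (thetaFlux c d M) θ ψ = sin ψ * (pd₁ M θ ψ * sin θ * cos θ
      + M θ ψ * (cos θ ^ 2 - sin θ ^ 2)
      + (2 * sin θ * cos θ * pd₁ c θ ψ + sin θ ^ 2 * pd₁ (pd₁ c) θ ψ)
      + (2 * (cos θ ^ 2 - sin θ ^ 2) * c θ ψ + 2 * sin θ * cos θ * pd₁ c θ ψ)
      + (cos θ * pd₂ d θ ψ + sin θ * pd₁ (pd₂ d) θ ψ)) := by
  have hs := hasDerivAt_sin θ
  have hC := hasDerivAt_cos θ
  have h := (((((hM.hasDerivAt_fst θ ψ).mul hs).mul hC).add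
    ((hs.pow 2).mul ((hc.pd₁).hasDerivAt_fst θ ψ))).add
    (((hs.const_mul 2).mul hC).mul (hc.hasDerivAt_fst θ ψ))).add
    (hs.mul ((hd.pd₂).hasDerivAt_fst θ ψ))
  refine (h.const_mul (sin ψ)).deriv.trans ?_
  simp only [Pi.mul_apply, Pi.pow_apply]
  push_cast
  ring

lemma lbar_hasDerivAt_snd (hc : SmoothTwo c) (hd : SmoothTwo d) (θ ψ : ℝ) :
    HasDerivAt (lbar c d θ) (pd₂ (lbar c d) θ ψ) ψ := by
  have h := ((((hd.pd₁).hasDerivAt_snd θ ψ).add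
    (((hd.hasDerivAt_snd θ ψ).const_mul 2).mul_const (cos θ / sin θ))).sub
    (((hc.pd₂).hasDerivAt_snd θ ψ).mul_const (sin θ)⁻¹))
  exact (h.differentiableAt : DifferentiableAt ℝ (lbar c d θ) ψ).hasDerivAt

lemma continuous_pd₂_lbar (hc : SmoothTwo c) (hd : SmoothTwo d) (θ : ℝ) :
    Continuous (pd₂ (lbar c d) θ) := by
  have h : ContDiff ℝ 1 (lbar c d θ) := by
    have slice {f : ℝ → ℝ → ℝ} (hf : SmoothTwo f) : ContDiff ℝ 1 (fun ψ => f θ ψ) :=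
      (hf.comp (contDiff_const.prodMk contDiff_id)).of_le (by exact_mod_cast le_top)
    have h1 := slice hd.pd₁
    have h2 := slice hd
    have h3 := slice hc.pd₂
    unfold lbar
    fun_prop
  exact h.continuous_deriv le_rfl

/-- Away from the poles, the integral over a period in `ψ` only sees `2 M sin²θ sin ψ - ∂_θ g`:
what remains is `∂_ψ (M cos ψ + l̄ sin θ sin ψ)`. -/
lemma integrand_inner (hc : SmoothTwo c) (hd : SmoothTwo d) (hM : SmoothTwo M)
    {θ : ℝ} (hs : sin θ ≠ 0) (hper : M θ 0 = M θ (2 * π)) :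
    (∫ ψ in (0:ℝ)..(2 * π),
      (4 * M θ ψ * sin θ * sin ψ - pd₁ M θ ψ * cos θ * sin ψ
        - pd₂ M θ ψ * (sin θ)⁻¹ * cos ψ
        - pd₁ (lfun c d) θ ψ * sin θ * sin ψ - pd₂ (lbar c d) θ ψ * sin ψ
        - 2 * lfun c d θ ψ * cos θ * sin ψ - lbar c d θ ψ * cos ψ) * sin θ)
    = ∫ ψ in (0:ℝ)..(2 * π),
      (2 * (M θ ψ * sin θ ^ 2 * sin ψ) - pd₁ (thetaFlux c d M) θ ψ) := by
  have slice {f : ℝ → ℝ → ℝ} (hf : SmoothTwo f) : Continuous (f θ) :=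
    hf.continuous.comp (by fun_prop : Continuous fun ψ : ℝ => (θ, ψ))
  have cMψ := slice hM.pd₂
  have cM := slice hM
  have cg := slice (thetaFlux_smooth hc hd hM).pd₁
  have cl : Continuous (lbar c d θ) :=
    continuous_iff_continuousAt.2 fun ψ => (lbar_hasDerivAt_snd hc hd θ ψ).continuousAt
  have cl' := continuous_pd₂_lbar hc hd θ
  let h' : ℝ → ℝ := fun ψ => (pd₂ M θ ψ * cos ψ + M θ ψ * (-sin ψ))
    + (pd₂ (lbar c d) θ ψ * sin ψ + lbar c d θ ψ * cos ψ) * sin θ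
  have ch' : Continuous h' := by fun_prop
  have hint : ∫ ψ in (0:ℝ)..(2 * π), h' ψ = 0 := by
    rw [intervalIntegral.integral_eq_sub_of_hasDerivAt
      (f := fun ψ => M θ ψ * cos ψ + lbar c d θ ψ * sin ψ * sin θ)
      (fun ψ _ => ((hM.hasDerivAt_snd θ ψ).mul (hasDerivAt_cos ψ)).add
        (((lbar_hasDerivAt_snd hc hd θ ψ).mul (hasDerivAt_sin ψ)).mul_const (sin θ)))
      (ch'.intervalIntegrable _ _)]
    simp [hper]
  have hcont : Continuous fun ψ => 2 * (M θ ψ * sin θ ^ 2 * sin ψ)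
      - pd₁ (thetaFlux c d M) θ ψ := by fun_prop
  have hsub := intervalIntegral.integral_sub (hcont.intervalIntegrable 0 (2 * π) (μ := volume))
    (ch'.intervalIntegrable _ _)
  rw [hint, sub_zero] at hsub
  rw [← hsub]
  refine intervalIntegral.integral_congr fun ψ _ => ?_
  have hC : cos θ ^ 2 = 1 - sin θ ^ 2 := cos_sq' θ
  simp only [h', pd₁_thetaFlux hc hd hM, pd₁_lfun hc hd hs, lfun]
  field_simp
  ring_nf
  simp only [hC]
  ring

/-- `∂_θ g` integrates to zero: after exchanging the integrals, `g` vanishes at both poles. -/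
lemma integral_pd₁_thetaFlux (hc : SmoothTwo c) (hd : SmoothTwo d) (hM : SmoothTwo M) :
    ∫ θ in (0:ℝ)..π, ∫ ψ in (0:ℝ)..(2 * π), pd₁ (thetaFlux c d M) θ ψ = 0 := by
  have hg := thetaFlux_smooth hc hd hM
  have hcont := hg.pd₁.continuous
  rw [intervalIntegral_intervalIntegral_swap]
  · have h0 : ∀ ψ, ∫ θ in (0:ℝ)..π, pd₁ (thetaFlux c d M) θ ψ = 0 := fun ψ => by
      rw [intervalIntegral.integral_eq_sub_of_hasDerivAt
        (f := fun θ => thetaFlux c d M θ ψ) (fun θ _ => hg.hasDerivAt_fst θ ψ)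
        ((hcont.comp (by fun_prop : Continuous (·, ψ))).intervalIntegrable _ _)]
      simp [thetaFlux]
    simp [h0]
  · exact (hcont.continuousOn.integrableOn_compact
      (isCompact_uIcc.prod isCompact_uIcc)).mono_set
      (Set.prod_mono Set.uIoc_subset_uIcc Set.uIoc_subset_uIcc)

end

/-- Integration-by-parts identity reducing the ADM momentum integrand `𝕂₂` to the
Bondi momentum aspect `M n²` plus news correction terms. -/
theorem integration_by_parts_K2
    (c d M : ℝ → ℝ → ℝ)
    (hc : ContDiff ℝ (⊤ : ℕ∞) (fun p : ℝ × ℝ => c p.1 p.2))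
    (hd : ContDiff ℝ (⊤ : ℕ∞) (fun p : ℝ × ℝ => d p.1 p.2))
    (hM : ContDiff ℝ (⊤ : ℕ∞) (fun p : ℝ × ℝ => M p.1 p.2))
    (hAc : CondA c) (hAd : CondA d) (hAM : CondA M)
    (hB0 : (∫ ψ in (0:ℝ)..(2 * π), c 0 ψ) = 0)
    (hBπ : (∫ ψ in (0:ℝ)..(2 * π), c π ψ) = 0) :
    (∫ θ in (0:ℝ)..π, ∫ ψ in (0:ℝ)..(2 * π),
      (4 * M θ ψ * sin θ * sin ψ - pd₁ M θ ψ * cos θ * sin ψ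
        - pd₂ M θ ψ * (sin θ)⁻¹ * cos ψ
        - pd₁ (lfun c d) θ ψ * sin θ * sin ψ - pd₂ (lbar c d) θ ψ * sin ψ
        - 2 * lfun c d θ ψ * cos θ * sin ψ - lbar c d θ ψ * cos ψ) * sin θ)
    = 2 * ∫ θ in (0:ℝ)..π, ∫ ψ in (0:ℝ)..(2 * π), M θ ψ * sin θ ^ 2 * sin ψ := by
  have cMs : Continuous fun p : ℝ × ℝ => M p.1 p.2 * sin p.1 ^ 2 * sin p.2 := by
    have := hM.continuous
    fun_prop
  have cg := (thetaFlux_smooth hc hd hM).pd₁.continuous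
  have i₁ (θ : ℝ) : IntervalIntegrable (fun ψ => M θ ψ * sin θ ^ 2 * sin ψ) volume 0 (2 * π) :=
    (cMs.comp (by fun_prop : Continuous (θ, ·))).intervalIntegrable _ _
  have i₂ (θ : ℝ) : IntervalIntegrable (fun ψ => pd₁ (thetaFlux c d M) θ ψ) volume 0 (2 * π) :=
    (cg.comp (by fun_prop : Continuous (θ, ·))).intervalIntegrable _ _
  have o₁ : Continuous fun θ => ∫ ψ in (0:ℝ)..(2 * π), M θ ψ * sin θ ^ 2 * sin ψ :=
    intervalIntegral.continuous_parametric_intervalIntegral_of_continuous' cMs _ _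
  have o₂ : Continuous fun θ => ∫ ψ in (0:ℝ)..(2 * π), pd₁ (thetaFlux c d M) θ ψ :=
    intervalIntegral.continuous_parametric_intervalIntegral_of_continuous' cg _ _
  calc
    _ = ∫ θ in (0:ℝ)..π, (2 * (∫ ψ in (0:ℝ)..(2 * π), M θ ψ * sin θ ^ 2 * sin ψ)
          - ∫ ψ in (0:ℝ)..(2 * π), pd₁ (thetaFlux c d M) θ ψ) := by
      -- The poles, where `csc θ` takes a junk value, form a null set.
      refine intervalIntegral.integral_congr_Ioo_of_le pi_pos.le fun θ hθ => ?_
      rw [integrand_inner hc hd hM (sin_pos_of_mem_Ioo hθ).ne' (hAM θ).1,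
        intervalIntegral.integral_sub ((i₁ θ).const_mul 2) (i₂ θ),
        intervalIntegral.integral_const_mul]
    _ = _ := by
      rw [intervalIntegral.integral_sub ((o₁.const_mul 2).intervalIntegrable _ _)
          (o₂.intervalIntegrable _ _),
        integral_pd₁_thetaFlux hc hd hM, intervalIntegral.integral_const_mul, sub_zero]
end
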